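/- arXiv:2410.04697 — 6 statements merged into one kernel-verified Lean document; each statement's English description precedes it below -/
import Mathlib

section
/- Let d ≥ 1, let h > 0, θ > 0 and δ ≥ 2, and define the taming map Υ_h : ℝ^d → ℝ^d by Υ_h(x) = (1 + ‖x‖^δ h^{−θ})^{−1} x. Then Υ_h is twice continuously differentiable on ℝ^d (i.e. Υ_h is of class C²). -/
/-!
The scalar field `x ↦ ‖x‖ ^ δ` is `C²` for `δ ≥ 2`; since `1 + ‖x‖ ^ δ * h ^ (-θ) > 0`, the map
`Υ` is then `C²` as a quotient. For `δ = 2` the squared norm is smooth. For `δ > 2` the gradient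
of `‖x‖ ^ δ` is `δ • ‖x‖ ^ (δ - 2) • x`, so it suffices that `x ↦ ‖x‖ ^ q • x` is `C¹` for `q > 0`
(`contDiff_one_norm_rpow_smul`). The only delicate point is the origin, where the derivative
vanishes and is continuous because its norm is at most `(1 + q) * ‖x‖ ^ q`.
-/

section

variable {E : Type*} [NormedAddCommGroup E] [InnerProductSpace ℝ E]

/-- The derivative of `x ↦ ‖x‖ ^ q • x`. At the origin both terms vanish when `q > 0`, whatever
the value of `‖0‖ ^ (q - 2)`. -/
noncomputable def normRpowSmulDeriv (q : ℝ) (x : E) : E →L[ℝ] E :=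
  ‖x‖ ^ q • ContinuousLinearMap.id ℝ E +
    (q * ‖x‖ ^ (q - 2)) • (innerSL ℝ x).smulRight x

lemma normRpowSmulDeriv_zero {q : ℝ} (hq : 0 < q) : normRpowSmulDeriv q (0 : E) = 0 := by
  simp [normRpowSmulDeriv, Real.zero_rpow hq.ne']

lemma norm_normRpowSmulDeriv_le {q : ℝ} (hq : 0 < q) (x : E) :
    ‖normRpowSmulDeriv q x‖ ≤ (1 + q) * ‖x‖ ^ q := by
  rcases eq_or_ne x 0 with rfl | hx
  · simp [normRpowSmulDeriv_zero hq, Real.zero_rpow hq.ne']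
  have hx' : 0 < ‖x‖ := norm_pos_iff.2 hx
  have hpow : ‖x‖ ^ (q - 2) * (‖x‖ * ‖x‖) = ‖x‖ ^ q := by
    rw [← sq, ← Real.rpow_natCast ‖x‖ 2, ← Real.rpow_add hx']
    norm_num
  have h1 : ‖‖x‖ ^ q • ContinuousLinearMap.id ℝ E‖ ≤ ‖x‖ ^ q := by
    rw [norm_smul, Real.norm_of_nonneg (by positivity)]
    exact mul_le_of_le_one_right (by positivity) ContinuousLinearMap.norm_id_le
  have h2 : ‖(q * ‖x‖ ^ (q - 2)) • (innerSL ℝ x).smulRight x‖ = q * ‖x‖ ^ q := by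
    rw [norm_smul, Real.norm_of_nonneg (by positivity), ContinuousLinearMap.norm_smulRight_apply,
      innerSL_apply_norm, mul_assoc, hpow]
  calc ‖normRpowSmulDeriv q x‖ ≤ _ := norm_add_le _ _
    _ ≤ ‖x‖ ^ q + q * ‖x‖ ^ q := add_le_add h1 h2.le
    _ = (1 + q) * ‖x‖ ^ q := by ring

lemma tendsto_norm_rpow_zero {q : ℝ} (hq : 0 < q) :
    Filter.Tendsto (fun x : E ↦ ‖x‖ ^ q) (nhds 0) (nhds 0) := by
  have : ContinuousAt (fun x : E ↦ ‖x‖ ^ q) 0 :=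
    continuousAt_id.norm.rpow_const (.inr hq.le)
  simpa [ContinuousAt, Real.zero_rpow hq.ne'] using this

lemma hasFDerivAt_norm_rpow_smul {q : ℝ} (hq : 0 < q) (x : E) :
    HasFDerivAt (fun x : E ↦ ‖x‖ ^ q • x) (normRpowSmulDeriv q x) x := by
  rcases eq_or_ne x 0 with rfl | hx
  · rw [normRpowSmulDeriv_zero hq]
    refine .of_isLittleO ?_
    have h1 : (fun x : E ↦ ‖x‖ ^ q) =o[nhds 0] (fun _ ↦ (1 : ℝ)) :=
      (Asymptotics.isLittleO_one_iff ℝ).2 (tendsto_norm_rpow_zero hq)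
    simpa using h1.smul_isBigO (Asymptotics.isBigO_refl (fun x : E ↦ x) (nhds 0))
  · have h0 : HasFDerivAt (fun x : E ↦ ‖x‖ ^ q) ((q * ‖x‖ ^ (q - 2)) • innerSL ℝ x) x := by
      -- `hasFDerivAt_norm_rpow` needs exponent `> 1`; off the origin any exponent works,
      -- writing the function as `(‖x‖ ^ 2) ^ (q / 2)`.
      apply HasStrictFDerivAt.hasFDerivAt
      convert! (hasStrictFDerivAt_norm_sq x).rpow_const (p := q / 2) (by simp [hx]) using 0
      simp_rw [← Real.rpow_natCast_mul (norm_nonneg _), ← Nat.cast_smul_eq_nsmul ℝ, smul_smul]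
      ring_nf
    refine (h0.smul (hasFDerivAt_id x)).congr_fderiv ?_
    ext v
    simp [normRpowSmulDeriv, smul_smul]

lemma contDiff_one_norm_rpow_smul {q : ℝ} (hq : 0 < q) :
    ContDiff ℝ 1 (fun x : E ↦ ‖x‖ ^ q • x) := by
  refine contDiff_one_iff_hasFDerivAt.2
    ⟨normRpowSmulDeriv q, ?_, hasFDerivAt_norm_rpow_smul hq⟩
  rw [continuous_iff_continuousAt]
  intro x
  rcases eq_or_ne x 0 with rfl | hx
  · rw [ContinuousAt, normRpowSmulDeriv_zero hq]
    refine squeeze_zero_norm (norm_normRpowSmulDeriv_le hq) ?_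
    simpa using (tendsto_norm_rpow_zero (E := E) hq).const_mul (1 + q)
  · have hn : ‖x‖ ≠ 0 := norm_ne_zero_iff.2 hx
    have hr (r : ℝ) : ContinuousAt (fun x : E ↦ ‖x‖ ^ r) x :=
      continuousAt_id.norm.rpow_const (.inl hn)
    have hs : Continuous fun x : E ↦ (innerSL ℝ x).smulRight x := by fun_prop
    exact ((hr q).smul continuousAt_const).add
      ((continuousAt_const.mul (hr (q - 2))).smul hs.continuousAt)

lemma contDiff_two_norm_rpow {p : ℝ} (hp : 2 ≤ p) : ContDiff ℝ 2 (fun x : E ↦ ‖x‖ ^ p) := by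
  rcases hp.eq_or_lt with rfl | hp
  · simpa using contDiff_norm_sq ℝ (E := E) (n := 2)
  · refine (contDiff_succ_iff_hasFDerivAt (n := 1)).2
      ⟨fun x ↦ (p * ‖x‖ ^ (p - 2)) • innerSL ℝ x, ?_,
        fun x ↦ hasFDerivAt_norm_rpow x (by linarith)⟩
    have hL : ContDiff ℝ 1 (fun x : E ↦ innerSL ℝ x) :=
      (innerSL ℝ (E := E)).contDiff
    have := (hL.comp (contDiff_one_norm_rpow_smul (E := E) (sub_pos.2 hp))).const_smul p
    simpa [Function.comp_def, smul_smul] using this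

end

/-- For `δ ≥ 2`, the taming map `Υ_h(x) = (1 + ‖x‖^δ h^{-θ})⁻¹ x` is of class `C²`
on `ℝ^d`. -/
theorem taming_contDiff_two
    (d : ℕ) (hd : 1 ≤ d) (h θ δ : ℝ) (hh : 0 < h) (hθ : 0 < θ) (hδ : 2 ≤ δ)
    (Υ : EuclideanSpace ℝ (Fin d) → EuclideanSpace ℝ (Fin d))
    (hΥ : ∀ x, Υ x = (1 + ‖x‖ ^ δ * h ^ (-θ))⁻¹ • x) :
    ContDiff ℝ 2 Υ := by
  rw [funext hΥ]
  exact ((contDiff_const.add ((contDiff_two_norm_rpow hδ).mul contDiff_const)).inv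
    fun x ↦ by positivity).smul contDiff_id
end

section
/- Let d ≥ 1, let h > 0, θ > 0, δ > 0, and define the taming map Υ_h : ℝ^d → ℝ^d by Υ_h(x) = (1 + ‖x‖^δ h^{−θ})^{−1} x. Then for every x ∈ ℝ^d, Υ_h is Fréchet differentiable at x and the operator norm of its derivative satisfies ‖Υ_h′(x)‖_{L(ℝ^d,ℝ^d)} ≤ δ ‖x‖^δ h^{−θ} + 1. -/
/-!
Away from the origin the product and chain rules give, with `N = ‖x‖ ^ δ` and `c = h ^ (-θ)`,
`Υ'(x) v = (1 + N c)⁻¹ v - (1 + N c)⁻² c (N'(x) v) x`, where `‖N'(x)‖ ‖x‖ ≤ δ N`. Since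
`(1 + N c)⁻¹ ≤ 1`, the two summands have operator norms at most `1` and `δ N c`.

At the origin the norm power need not be differentiable, but the scalar factor of `Υ` tends to `1`,
so `Υ y - y = o(y)` and the derivative is the identity, of norm at most `1`.
-/

/-- Away from the origin `‖·‖ ^ δ` is differentiable. The bound on its derivative, scaled by `‖x‖`,
avoids the exponent `δ - 1`. -/
lemma exists_hasFDerivAt_norm_rpow {E : Type*} [NormedAddCommGroup E] [InnerProductSpace ℝ E]
    {δ : ℝ} (hδ : 0 < δ) {x : E} (hx : x ≠ 0) :
    ∃ F : E →L[ℝ] ℝ, HasFDerivAt (fun y : E => ‖y‖ ^ δ) F x ∧ ‖F‖ * ‖x‖ ≤ δ * ‖x‖ ^ δ := by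
  have hpos : 0 < ‖x‖ := norm_pos_iff.mpr hx
  have hsq : ∀ (y : E) (s : ℝ), (‖y‖ ^ 2) ^ s = ‖y‖ ^ (2 * s) := fun y s => by
    rw [← Real.rpow_natCast, ← Real.rpow_mul (norm_nonneg y)]; norm_num
  -- The squared norm is smooth, so differentiate `(‖y‖ ^ 2) ^ (δ / 2)`.
  have h1 := (hasStrictFDerivAt_norm_sq x).hasFDerivAt.rpow_const (p := δ / 2)
    (Or.inl (by positivity))
  have hfun : (fun y : E => (‖y‖ ^ 2) ^ (δ / 2)) = fun y : E => ‖y‖ ^ δ := by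
    funext y; rw [hsq]; congr 1; ring
  rw [hfun] at h1
  refine ⟨_, h1, ?_⟩
  have hpow : ‖x‖ ^ (2 * (δ / 2 - 1)) * (‖x‖ * ‖x‖) = ‖x‖ ^ δ := by
    rw [← pow_two, ← Real.rpow_natCast ‖x‖ 2, ← Real.rpow_add hpos]
    congr 1; push_cast; ring
  have hn : ‖(2 : ℕ) • innerSL ℝ x‖ ≤ 2 * ‖x‖ := by
    refine (norm_nsmul_le).trans ?_
    simp
  rw [norm_smul, hsq, Real.norm_of_nonneg (by positivity), ← hpow]
  calc δ / 2 * ‖x‖ ^ (2 * (δ / 2 - 1)) * ‖(2 : ℕ) • innerSL ℝ x‖ * ‖x‖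
      ≤ δ / 2 * ‖x‖ ^ (2 * (δ / 2 - 1)) * (2 * ‖x‖) * ‖x‖ := by gcongr
    _ = _ := by ring

/-- The taming map is Fréchet differentiable at every point, with derivative of
operator norm at most `δ ‖x‖^δ h^{-θ} + 1`. -/
theorem taming_fderiv_opNorm_bound
    (d : ℕ) (hd : 1 ≤ d) (h θ δ : ℝ) (hh : 0 < h) (hθ : 0 < θ) (hδ : 0 < δ)
    (Υ : EuclideanSpace ℝ (Fin d) → EuclideanSpace ℝ (Fin d))
    (hΥ : ∀ x, Υ x = (1 + ‖x‖ ^ δ * h ^ (-θ))⁻¹ • x)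
    (x : EuclideanSpace ℝ (Fin d)) :
    ∃ D : EuclideanSpace ℝ (Fin d) →L[ℝ] EuclideanSpace ℝ (Fin d),
      HasFDerivAt Υ D x ∧ ‖D‖ ≤ δ * ‖x‖ ^ δ * h ^ (-θ) + 1 := by
  obtain rfl : Υ = fun y => (1 + ‖y‖ ^ δ * h ^ (-θ))⁻¹ • y := funext hΥ
  have hc : 0 < h ^ (-θ) := Real.rpow_pos_of_pos hh _
  generalize h ^ (-θ) = c at *
  rcases eq_or_ne x 0 with rfl | hx
  · refine ⟨ContinuousLinearMap.id ℝ _, ?_, ?_⟩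
    · rw [hasFDerivAt_iff_isLittleO]
      have hu : Filter.Tendsto
          (fun y : EuclideanSpace ℝ (Fin d) => (1 + ‖y‖ ^ δ * c)⁻¹ - 1) (nhds 0) (nhds 0) := by
        have hcont : ContinuousAt
            (fun y : EuclideanSpace ℝ (Fin d) => (1 + ‖y‖ ^ δ * c)⁻¹ - 1) 0 := by
          refine ContinuousAt.sub (ContinuousAt.inv₀ ?_ ?_) continuousAt_const
          · exact continuousAt_const.add
              ((continuousAt_id.norm.rpow_const (Or.inr hδ.le)).mul continuousAt_const)
          · simp [Real.zero_rpow hδ.ne']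
        simpa [ContinuousAt, Real.zero_rpow hδ.ne'] using hcont
      have hlit := ((Asymptotics.isLittleO_one_iff ℝ).mpr hu).smul_isBigO
        (Asymptotics.isBigO_refl (fun y : EuclideanSpace ℝ (Fin d) => y) (nhds 0))
      simpa [sub_smul] using hlit
    · have := ContinuousLinearMap.norm_id_le (𝕜 := ℝ) (E := EuclideanSpace ℝ (Fin d))
      simpa [Real.zero_rpow hδ.ne'] using this
  · obtain ⟨F, hF, hFn⟩ := exists_hasFDerivAt_norm_rpow hδ hx
    have hpos : 0 < 1 + ‖x‖ ^ δ * c := by positivity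
    have hA := (hasDerivAt_inv hpos.ne').comp_hasFDerivAt x ((hF.mul_const c).const_add 1)
    refine ⟨_, hA.smul (hasFDerivAt_id x), ?_⟩
    have hu1 : (1 + ‖x‖ ^ δ * c)⁻¹ ≤ 1 := inv_le_one_of_one_le₀ (by
      have : 0 ≤ ‖x‖ ^ δ * c := by positivity
      linarith)
    have hu2 : ((1 + ‖x‖ ^ δ * c) ^ 2)⁻¹ ≤ 1 := by
      rw [← inv_pow]; exact pow_le_one₀ (by positivity) hu1
    refine ContinuousLinearMap.opNorm_le_bound _ (by positivity) fun v => ?_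
    have hFv : |F v| * ‖x‖ ≤ δ * ‖x‖ ^ δ * ‖v‖ := by
      calc |F v| * ‖x‖ ≤ ‖F‖ * ‖v‖ * ‖x‖ := by gcongr; exact F.le_opNorm v
        _ = ‖F‖ * ‖x‖ * ‖v‖ := by ring
        _ ≤ _ := by gcongr
    have hv : ‖(1 + ‖x‖ ^ δ * c)⁻¹ • v‖ ≤ 1 * ‖v‖ := by
      rw [norm_smul, Real.norm_of_nonneg (by positivity)]; gcongr
    have hw : ‖(-((1 + ‖x‖ ^ δ * c) ^ 2)⁻¹ * (c * F v)) • x‖ ≤ δ * ‖x‖ ^ δ * c * ‖v‖ := by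
      rw [norm_smul, norm_mul, norm_neg, Real.norm_of_nonneg (by positivity), Real.norm_eq_abs,
        abs_mul, abs_of_pos hc]
      calc ((1 + ‖x‖ ^ δ * c) ^ 2)⁻¹ * (c * |F v|) * ‖x‖ ≤ 1 * (c * |F v|) * ‖x‖ := by gcongr
        _ = c * (|F v| * ‖x‖) := by ring
        _ ≤ c * (δ * ‖x‖ ^ δ * ‖v‖) := by gcongr
        _ = _ := by ring
    calc _ = ‖(1 + ‖x‖ ^ δ * c)⁻¹ • v + (-((1 + ‖x‖ ^ δ * c) ^ 2)⁻¹ * (c * F v)) • x‖ := by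
          simp
      _ ≤ _ := (norm_add_le _ _).trans (add_le_add hv hw)
      _ = _ := by ring
end

section
/- Let d ≥ 1, let h > 0, θ > 0, δ > 0, and define the taming map Υ_h : ℝ^d → ℝ^d by Υ_h(x) = (1 + ‖x‖^δ h^{−θ})^{−1} x. Then for every x ∈ ℝ^d, Υ_h is Fréchet differentiable at x and the operator norm of the difference between its derivative and the identity map I of ℝ^d satisfies ‖Υ_h′(x) − I‖_{L(ℝ^d,ℝ^d)} ≤ (δ + 1) ‖x‖^δ h^{−θ}. -/
/-!
Write `c = h ^ (-θ)`, `r = ‖x‖`, `u = r ^ δ * c`. The map is radial, `Υ y = g ‖y‖ • y` with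
`g t = (1 + t ^ δ * c)⁻¹`.

At `x = 0` the factor `g ‖y‖` tends to `1`, so `Υ y - y = (g ‖y‖ - 1) • y = o(y)`: the derivative
is the identity. This case is separate because the norm is not differentiable there.

At `x ≠ 0` the norm is differentiable with derivative `N`, and the product rule gives
`Υ'(x) - I = (g r - 1) • I + g' r • N(·) x`. Since the norm is `1`-Lipschitz, `‖N‖ ≤ 1`, so the
operator norm is at most `|g r - 1| + |g' r| * r = u / (1 + u) + δ * u / (1 + u) ^ 2`,
which is at most `(δ + 1) * u`.
-/

/-- If a scalar factor is continuous at `0` with value `1` there, multiplying the identity by it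
gives a map with derivative `I` at `0`, without differentiability of the factor. -/
theorem hasFDerivAt_smul_id_zero {E : Type*} [NormedAddCommGroup E] [NormedSpace ℝ E]
    (a : E → ℝ) (ha : ContinuousAt a 0) (ha0 : a 0 = 1) :
    HasFDerivAt (fun y => a y • y) (ContinuousLinearMap.id ℝ E) 0 := by
  rw [hasFDerivAt_iff_isLittleO_nhds_zero]
  have h1 : (fun y => a y - 1) =o[nhds 0] (fun _ : E => (1 : ℝ)) := by
    rw [Asymptotics.isLittleO_one_iff]
    have := ha.tendsto.sub_const 1
    rwa [ha0, sub_self] at this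
  have h2 := h1.smul_isBigO (Asymptotics.isBigO_refl (fun y : E => y) (nhds 0))
  simpa [sub_smul] using h2

theorem hasDerivAt_taming_factor (c δ r : ℝ) (hc : 0 < c) (hr : 0 < r) :
    HasDerivAt (fun t : ℝ => (1 + t ^ δ * c)⁻¹)
      (-(δ * r ^ (δ - 1) * c) / (1 + r ^ δ * c) ^ 2) r := by
  have h1 : HasDerivAt (fun t : ℝ => 1 + t ^ δ * c) (δ * r ^ (δ - 1) * c) r :=
    ((Real.hasDerivAt_rpow_const (Or.inl hr.ne')).mul_const c).const_add 1
  exact h1.fun_inv (by positivity)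

/-- The derivative of the norm has operator norm at most `1`, because the norm is
`1`-Lipschitz. -/
theorem norm_hasFDerivAt_norm_le_one {E : Type*} [NormedAddCommGroup E] [NormedSpace ℝ E]
    {x : E} {N : E →L[ℝ] ℝ} (hN : HasFDerivAt (fun y : E => ‖y‖) N x) : ‖N‖ ≤ 1 := by
  simpa using hN.le_of_lipschitz lipschitzWith_one_norm

theorem taming_scalar_bound (δ u : ℝ) (hδ : 0 < δ) (hu : 0 ≤ u) :
    |(1 + u)⁻¹ - 1| + δ * u / (1 + u) ^ 2 ≤ (δ + 1) * u := by
  have h1 : (1 + u)⁻¹ - 1 = -(u / (1 + u)) := by field_simp; ring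
  rw [h1, abs_neg, abs_of_nonneg (by positivity)]
  have h2 : u / (1 + u) ≤ u := div_le_self hu (by linarith)
  have h3 : δ * u / (1 + u) ^ 2 ≤ δ * u :=
    div_le_self (by positivity) (one_le_pow₀ (by linarith))
  linarith

open Real

/-- The taming map is Fréchet differentiable at every point, and its derivative
differs from the identity by at most `(δ+1) ‖x‖^δ h^{-θ}` in operator norm. -/
theorem taming_fderiv_sub_id_opNorm_bound
    (d : ℕ) (hd : 1 ≤ d) (h θ δ : ℝ) (hh : 0 < h) (hθ : 0 < θ) (hδ : 0 < δ)
    (Υ : EuclideanSpace ℝ (Fin d) → EuclideanSpace ℝ (Fin d))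
    (hΥ : ∀ x, Υ x = (1 + ‖x‖ ^ δ * h ^ (-θ))⁻¹ • x)
    (x : EuclideanSpace ℝ (Fin d)) :
    ∃ D : EuclideanSpace ℝ (Fin d) →L[ℝ] EuclideanSpace ℝ (Fin d),
      HasFDerivAt Υ D x ∧
      ‖D - ContinuousLinearMap.id ℝ (EuclideanSpace ℝ (Fin d))‖
        ≤ (δ + 1) * ‖x‖ ^ δ * h ^ (-θ) := by
  obtain rfl : Υ = fun y => (1 + ‖y‖ ^ δ * h ^ (-θ))⁻¹ • y := funext hΥ
  have hc : 0 < h ^ (-θ) := rpow_pos_of_pos hh _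
  generalize h ^ (-θ) = c at *
  rcases eq_or_ne x 0 with rfl | hx
  · refine ⟨ContinuousLinearMap.id ℝ _, hasFDerivAt_smul_id_zero _ ?_ ?_, ?_⟩
    · have h1 : ContinuousAt (fun y : EuclideanSpace ℝ (Fin d) => 1 + ‖y‖ ^ δ * c) 0 :=
        continuousAt_const.add
          ((continuous_norm.continuousAt.rpow_const (Or.inr hδ.le)).mul continuousAt_const)
      exact h1.inv₀ (by positivity)
    · simp [zero_rpow hδ.ne']
    · simp [zero_rpow hδ.ne']
  · have hr : 0 < ‖x‖ := norm_pos_iff.mpr hx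
    have hN := ((contDiffAt_norm (n := 1) ℝ hx).differentiableAt one_ne_zero).hasFDerivAt
    have hN1 := norm_hasFDerivAt_norm_le_one hN
    generalize fderiv ℝ (fun y : EuclideanSpace ℝ (Fin d) => ‖y‖) x = N at hN hN1
    have hg := (hasDerivAt_taming_factor c δ ‖x‖ hc hr).comp_hasFDerivAt x hN
    refine ⟨_, hg.smul (hasFDerivAt_id x), ?_⟩
    set g' := -(δ * ‖x‖ ^ (δ - 1) * c) / (1 + ‖x‖ ^ δ * c) ^ 2 with hg'
    have hg'r : |g'| * ‖x‖ = δ * (‖x‖ ^ δ * c) / (1 + ‖x‖ ^ δ * c) ^ 2 := by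
      rw [hg', neg_div, abs_neg, abs_of_nonneg (by positivity), rpow_sub_one hr.ne']
      field_simp
    have key := taming_scalar_bound δ (‖x‖ ^ δ * c) hδ (by positivity)
    rw [← hg'r, ← mul_assoc] at key
    refine le_trans (ContinuousLinearMap.opNorm_le_bound _ (by positivity) fun v => ?_) key
    have hv : |N v| ≤ ‖v‖ := by simpa using N.le_of_opNorm_le hN1 v
    calc _ = ‖((1 + ‖x‖ ^ δ * c)⁻¹ - 1) • v + (g' * N v) • x‖ := by
          congr 1
          simp only [Function.comp_apply, sub_apply,
            add_apply, smul_apply,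
            ContinuousLinearMap.smulRight_apply, ContinuousLinearMap.id_apply,
            smul_eq_mul, sub_smul, one_smul]
          abel
      _ ≤ |(1 + ‖x‖ ^ δ * c)⁻¹ - 1| * ‖v‖ + |g'| * |N v| * ‖x‖ := by
          refine (norm_add_le _ _).trans_eq ?_
          rw [norm_smul, norm_smul, norm_eq_abs, norm_eq_abs, abs_mul]
      _ ≤ |(1 + ‖x‖ ^ δ * c)⁻¹ - 1| * ‖v‖ + |g'| * ‖v‖ * ‖x‖ := by gcongr
      _ = _ := by ring
end

section
/- Let d ≥ 1, let h > 0, θ > 0 and δ ≥ 2, and define the taming map Υ_h : ℝ^d → ℝ^d by Υ_h(x) = (1 + ‖x‖^δ h^{−θ})^{−1} x. Then for every x ∈ ℝ^d and every u ∈ ℝ^d with ‖u‖ ≤ 1, the second Fréchet derivative of Υ_h satisfies ‖Υ_h″(x)(u,u)‖ ≤ 2δ² ‖x‖^{2δ−1} h^{−2θ} + (δ² + 5δ) ‖x‖^{δ−1} h^{−θ}. -/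
/-!
Write `a = h ^ (-θ)`, `r = ‖x‖` and `f x = (1 + r ^ δ * a)⁻¹ ∈ (0, 1]`. Since the gradient of `‖·‖ ^ p` is
`p * r ^ (p - 2) • x`, the first derivative of `Υ` is
`Υ' x = f • id - (f² a δ r ^ (δ - 2)) • ⟪x, ·⟫ x`, valid everywhere because `δ > 1`.

Away from the origin every factor is smooth, and differentiating once more gives
`Υ'' x (u, u) = 2 f³ a² δ² r ^ (2δ - 4) ⟪x, u⟫² x - f² a δ (δ - 2) r ^ (δ - 4) ⟪x, u⟫² x
  - f² a δ r ^ (δ - 2) (‖u‖² x + 2 ⟪x, u⟫ u)`,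
whose norm is at most `2 δ² a² r ^ (2δ - 1) + (δ (δ - 2) + 3 δ) a r ^ (δ - 1)` by Cauchy-Schwarz and `f ≤ 1`.
At the origin `Υ' x - Υ' 0 = O(r ^ δ) = o(r)`, so the second derivative vanishes there.
-/

open Real

namespace Taming

variable {E : Type*} [NormedAddCommGroup E] [InnerProductSpace ℝ E]

/-- Away from the origin the exponent is unrestricted, in contrast to `hasFDerivAt_norm_rpow`; the
exponent `δ - 2` may be smaller than `1`. -/
lemma hasFDerivAt_norm_rpow_of_ne {x : E} (hx : x ≠ 0) (p : ℝ) :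
    HasFDerivAt (fun y : E => ‖y‖ ^ p) ((p * ‖x‖ ^ (p - 2)) • innerSL ℝ x) x := by
  have hx' : 0 < ‖x‖ := norm_pos_iff.mpr hx
  have h1 := (hasStrictFDerivAt_norm_sq x).hasFDerivAt.rpow_const (p := p / 2)
    (Or.inl (by positivity))
  convert h1 using 1
  · funext y
    rw [← Real.rpow_natCast, ← Real.rpow_mul (norm_nonneg y)]
    congr 1
    push_cast
    ring
  · have : (‖x‖ ^ 2) ^ (p / 2 - 1) = ‖x‖ ^ (p - 2) := by
      rw [← Real.rpow_natCast, ← Real.rpow_mul (norm_nonneg x)]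
      congr 1
      push_cast
      ring
    rw [this]
    ext v
    simp
    ring

/-- The scalar factor of the taming map, with `a` in the role of `h ^ (-θ)`. -/
noncomputable def fac (a δ : ℝ) (x : E) : ℝ := (1 + ‖x‖ ^ δ * a)⁻¹

/-- The rank-one operator `v ↦ ⟪x, v⟫ x`. -/
noncomputable def rankOne (x : E) : E →L[ℝ] E := ContinuousLinearMap.smulRightL ℝ E E (innerSL ℝ x) x

/-- The first derivative of the taming map `x ↦ fac a δ x • x`. -/
noncomputable def D1 (a δ : ℝ) (x : E) : E →L[ℝ] E :=
  fac a δ x • ContinuousLinearMap.id ℝ E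
    - (fac a δ x ^ 2 * (a * δ) * ‖x‖ ^ (δ - 2)) • rankOne x

lemma den_pos {a δ : ℝ} (ha : 0 < a) (x : E) : 0 < 1 + ‖x‖ ^ δ * a := by positivity

lemma fac_pos {a δ : ℝ} (ha : 0 < a) (x : E) : 0 < fac a δ x := inv_pos.mpr (den_pos ha x)

lemma fac_le_one {a δ : ℝ} (ha : 0 < a) (x : E) : fac a δ x ≤ 1 := by
  apply inv_le_one_of_one_le₀
  have : 0 ≤ ‖x‖ ^ δ * a := by positivity
  linarith

lemma rankOne_apply (x v : E) : rankOne x v = inner ℝ x v • x := by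
  simp [rankOne]

lemma norm_rankOne_le (x : E) : ‖rankOne x‖ ≤ ‖x‖ ^ 2 := by
  refine ContinuousLinearMap.opNorm_le_bound _ (by positivity) fun v => ?_
  rw [rankOne_apply, norm_smul]
  have := norm_inner_le_norm (𝕜 := ℝ) x v
  nlinarith [norm_nonneg x]

lemma hasFDerivAt_fac {a δ : ℝ} (ha : 0 < a) (hδ : 2 ≤ δ) (x : E) :
    HasFDerivAt (fac a δ : E → ℝ)
      (-(fac a δ x ^ 2 * (a * δ) * ‖x‖ ^ (δ - 2)) • innerSL ℝ x) x := by
  have h1 := ((hasFDerivAt_norm_rpow x (show 1 < δ by linarith)).mul_const a).const_add 1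
  have h2 := (hasDerivAt_inv (den_pos (δ := δ) ha x).ne').comp_hasFDerivAt x h1
  have h3 : HasFDerivAt (fac a δ : E → ℝ) _ x := h2
  refine h3.congr_fderiv ?_
  ext v
  simp [fac]
  ring

lemma hasFDerivAt_taming {a δ : ℝ} (ha : 0 < a) (hδ : 2 ≤ δ) (x : E) :
    HasFDerivAt (fun y : E => fac a δ y • y) (D1 a δ x) x := by
  refine ((hasFDerivAt_fac ha hδ x).smul (hasFDerivAt_id x)).congr_fderiv ?_
  ext v
  simp [D1, rankOne_apply, smul_smul]
  module

/-- The derivative is `O(‖x‖ ^ δ)`-close to its value at the origin, which makes its own derivative there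
vanish. -/
lemma norm_D1_sub_le {a δ : ℝ} (ha : 0 < a) (hδ : 2 ≤ δ) (x : E) :
    ‖D1 a δ x - D1 a δ (0 : E)‖ ≤ (a + a * δ) * ‖x‖ ^ δ := by
  have h0 : D1 a δ (0 : E) = ContinuousLinearMap.id ℝ E := by
    ext v
    simp [D1, rankOne_apply, fac, Real.zero_rpow (show δ ≠ 0 by linarith)]
  have hf := fac_pos (δ := δ) ha x
  have hf1 := fac_le_one (δ := δ) ha x
  have hr : 0 ≤ ‖x‖ ^ δ := by positivity
  have hff : 1 - fac a δ x = fac a δ x * (‖x‖ ^ δ * a) := by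
    have := (den_pos (δ := δ) ha x).ne'
    unfold fac
    field_simp
    ring
  have hsplit : ‖x‖ ^ (δ - 2) * ‖x‖ ^ 2 = ‖x‖ ^ δ := by
    rcases eq_or_ne x 0 with rfl | hx
    · simp [Real.zero_rpow (show δ ≠ 0 by linarith)]
    · rw [← Real.rpow_natCast, ← Real.rpow_add (norm_pos_iff.mpr hx)]
      congr 1
      push_cast
      ring
  have e : D1 a δ x - D1 a δ (0 : E) = -((1 - fac a δ x) • ContinuousLinearMap.id ℝ E)
      - (fac a δ x ^ 2 * (a * δ) * ‖x‖ ^ (δ - 2)) • rankOne x := by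
    rw [h0, D1]
    module
  rw [e]
  refine (norm_sub_le _ _).trans ?_
  rw [norm_neg, norm_smul, norm_smul, Real.norm_of_nonneg (by linarith),
    Real.norm_of_nonneg (by positivity)]
  have t1 : (1 - fac a δ x) * ‖ContinuousLinearMap.id ℝ E‖ ≤ a * ‖x‖ ^ δ := by
    calc (1 - fac a δ x) * ‖ContinuousLinearMap.id ℝ E‖ ≤ (1 - fac a δ x) * 1 := by
          exact mul_le_mul_of_nonneg_left ContinuousLinearMap.norm_id_le (by linarith)
      _ = fac a δ x * (‖x‖ ^ δ * a) := by rw [mul_one, hff]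
      _ ≤ 1 * (‖x‖ ^ δ * a) := by gcongr
      _ = a * ‖x‖ ^ δ := by ring
  have t2 : fac a δ x ^ 2 * (a * δ) * ‖x‖ ^ (δ - 2) * ‖rankOne x‖ ≤ a * δ * ‖x‖ ^ δ := by
    calc _ ≤ 1 ^ 2 * (a * δ) * ‖x‖ ^ (δ - 2) * ‖x‖ ^ 2 := by
          gcongr
          exact norm_rankOne_le x
      _ = a * δ * (‖x‖ ^ (δ - 2) * ‖x‖ ^ 2) := by ring
      _ = _ := by rw [hsplit]
  linarith

lemma hasFDerivAt_D1_zero {a δ : ℝ} (ha : 0 < a) (hδ : 2 ≤ δ) :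
    HasFDerivAt (D1 a δ : E → E →L[ℝ] E) (0 : E →L[ℝ] E →L[ℝ] E) 0 := by
  rw [hasFDerivAt_iff_isLittleO_nhds_zero]
  simp only [zero_add, _root_.zero_apply, sub_zero]
  have h1 : (fun y : E => D1 a δ y - D1 a δ 0) =O[nhds 0] fun y : E => ‖y‖ ^ δ := by
    refine Asymptotics.IsBigO.of_bound (a + a * δ) (Filter.Eventually.of_forall fun y => ?_)
    rw [Real.norm_of_nonneg (by positivity)]
    exact norm_D1_sub_le ha hδ y
  refine h1.trans_isLittleO ?_
  -- `‖·‖ ^ δ` has vanishing derivative at the origin, that is `‖y‖ ^ δ = o(y)`.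
  have h2 := hasFDerivAt_iff_isLittleO_nhds_zero.mp
    (hasFDerivAt_norm_rpow (0 : E) (show 1 < δ by linarith))
  simpa [Real.zero_rpow (show δ ≠ 0 by linarith)] using h2

/-- The second derivative away from the origin, evaluated on the diagonal. -/
lemma exists_hasFDerivAt_D1 {a δ : ℝ} (ha : 0 < a) (hδ : 2 ≤ δ) {x : E} (hx : x ≠ 0) :
    ∃ D2 : E →L[ℝ] E →L[ℝ] E, HasFDerivAt (D1 a δ : E → E →L[ℝ] E) D2 x ∧
      ∀ u : E, D2 u u =
        (2 * fac a δ x ^ 3 * (a * δ) ^ 2 * (‖x‖ ^ (δ - 2)) ^ 2 * inner ℝ x u ^ 2) • x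
        - (fac a δ x ^ 2 * (a * δ) * (δ - 2) * ‖x‖ ^ (δ - 4) * inner ℝ x u ^ 2) • x
        - (fac a δ x ^ 2 * (a * δ) * ‖x‖ ^ (δ - 2) * ‖u‖ ^ 2) • x
        - (2 * (fac a δ x ^ 2 * (a * δ) * ‖x‖ ^ (δ - 2) * inner ℝ x u)) • u := by
  have hf := hasFDerivAt_fac ha hδ x
  have hp := hasFDerivAt_norm_rpow_of_ne hx (δ - 2)
  -- Over `ℝ` the conjugate-linear `innerSL ℝ` is linear; `I` is its linear version.
  obtain ⟨I, hI⟩ : ∃ I : E →L[ℝ] E →L[ℝ] ℝ, ∀ y, I y = innerSL ℝ y := ⟨innerSL ℝ, fun _ => rfl⟩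
  have hR : HasFDerivAt (rankOne : E → E →L[ℝ] E) _ x :=
    ((ContinuousLinearMap.smulRightL ℝ E E).hasFDerivAt_of_bilinear
      I.hasFDerivAt (hasFDerivAt_id x)).congr_of_eventuallyEq
        (Filter.Eventually.of_forall fun y => by simp [rankOne, hI])
  have hc := ((hf.pow 2).mul_const (a * δ)).mul hp
  have hD := (hf.smul_const (ContinuousLinearMap.id ℝ E)).sub (hc.smul hR)
  refine ⟨_, hD, fun u => ?_⟩
  have h4 : δ - 2 - 2 = δ - 4 := by ring
  simp [h4, hI, rankOne_apply, smul_smul]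
  module

lemma norm_second_le {a δ : ℝ} (ha : 0 < a) (hδ : 2 ≤ δ) {x : E} (hx : x ≠ 0) {u : E}
    (hu : ‖u‖ ≤ 1) :
    ‖(2 * fac a δ x ^ 3 * (a * δ) ^ 2 * (‖x‖ ^ (δ - 2)) ^ 2 * inner ℝ x u ^ 2) • x
        - (fac a δ x ^ 2 * (a * δ) * (δ - 2) * ‖x‖ ^ (δ - 4) * inner ℝ x u ^ 2) • x
        - (fac a δ x ^ 2 * (a * δ) * ‖x‖ ^ (δ - 2) * ‖u‖ ^ 2) • x
        - (2 * (fac a δ x ^ 2 * (a * δ) * ‖x‖ ^ (δ - 2) * inner ℝ x u)) • u‖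
      ≤ 2 * δ ^ 2 * ‖x‖ ^ (2 * δ - 1) * a ^ 2 + (δ ^ 2 + 5 * δ) * ‖x‖ ^ (δ - 1) * a := by
  have hr : 0 < ‖x‖ := norm_pos_iff.mpr hx
  have hf := fac_pos (δ := δ) ha x
  have hf1 := fac_le_one (δ := δ) ha x
  have hδ0 : 0 < δ := by linarith
  have hδ2 : 0 ≤ δ - 2 := by linarith
  have hin : |inner ℝ x u| ≤ ‖x‖ := (abs_real_inner_le_norm x u).trans (by nlinarith)
  have hpow : ∀ (p : ℝ) (n : ℕ), ‖x‖ ^ p * ‖x‖ ^ n = ‖x‖ ^ (p + n) := fun p n =>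
    (Real.rpow_add_natCast hr.ne' p n).symm
  have e1 : (‖x‖ ^ (δ - 2)) ^ 2 * ‖x‖ ^ 3 = ‖x‖ ^ (2 * δ - 1) := by
    rw [← Real.rpow_mul_natCast hr.le, hpow]
    congr 1
    push_cast
    ring
  have e2 : ‖x‖ ^ (δ - 4) * ‖x‖ ^ 3 = ‖x‖ ^ (δ - 1) := by
    rw [hpow]
    congr 1
    push_cast
    ring
  have e3 : ‖x‖ ^ (δ - 2) * ‖x‖ = ‖x‖ ^ (δ - 1) := by
    have := hpow (δ - 2) 1
    rw [pow_one] at this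
    rw [this]
    congr 1
    push_cast
    ring
  have n1 : ‖(2 * fac a δ x ^ 3 * (a * δ) ^ 2 * (‖x‖ ^ (δ - 2)) ^ 2 * inner ℝ x u ^ 2) • x‖
      ≤ 2 * δ ^ 2 * ‖x‖ ^ (2 * δ - 1) * a ^ 2 := by
    rw [norm_smul, Real.norm_of_nonneg (by positivity), ← sq_abs (inner ℝ x u)]
    calc _ ≤ 2 * 1 ^ 3 * (a * δ) ^ 2 * (‖x‖ ^ (δ - 2)) ^ 2 * ‖x‖ ^ 2 * ‖x‖ := by gcongr
      _ = 2 * δ ^ 2 * ((‖x‖ ^ (δ - 2)) ^ 2 * ‖x‖ ^ 3) * a ^ 2 := by ring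
      _ = _ := by rw [e1]
  have n2 : ‖(fac a δ x ^ 2 * (a * δ) * (δ - 2) * ‖x‖ ^ (δ - 4) * inner ℝ x u ^ 2) • x‖
      ≤ δ * (δ - 2) * (‖x‖ ^ (δ - 1) * a) := by
    rw [norm_smul, Real.norm_of_nonneg (by positivity), ← sq_abs (inner ℝ x u)]
    calc _ ≤ 1 ^ 2 * (a * δ) * (δ - 2) * ‖x‖ ^ (δ - 4) * ‖x‖ ^ 2 * ‖x‖ := by gcongr
      _ = δ * (δ - 2) * ((‖x‖ ^ (δ - 4) * ‖x‖ ^ 3) * a) := by ring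
      _ = _ := by rw [e2]
  have n3 : ‖(fac a δ x ^ 2 * (a * δ) * ‖x‖ ^ (δ - 2) * ‖u‖ ^ 2) • x‖
      ≤ δ * (‖x‖ ^ (δ - 1) * a) := by
    rw [norm_smul, Real.norm_of_nonneg (by positivity)]
    calc _ ≤ 1 ^ 2 * (a * δ) * ‖x‖ ^ (δ - 2) * 1 ^ 2 * ‖x‖ := by gcongr
      _ = δ * ((‖x‖ ^ (δ - 2) * ‖x‖) * a) := by ring
      _ = _ := by rw [e3]
  have n4 : ‖(2 * (fac a δ x ^ 2 * (a * δ) * ‖x‖ ^ (δ - 2) * inner ℝ x u)) • u‖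
      ≤ 2 * δ * (‖x‖ ^ (δ - 1) * a) := by
    rw [norm_smul, Real.norm_eq_abs, abs_mul, abs_mul, abs_of_nonneg (zero_le_two (α := ℝ)),
      abs_of_nonneg (show 0 ≤ fac a δ x ^ 2 * (a * δ) * ‖x‖ ^ (δ - 2) by positivity)]
    calc _ ≤ 2 * (1 ^ 2 * (a * δ) * ‖x‖ ^ (δ - 2) * ‖x‖) * 1 := by gcongr
      _ = 2 * δ * ((‖x‖ ^ (δ - 2) * ‖x‖) * a) := by ring
      _ = _ := by rw [e3]
  have hpos : 0 ≤ δ * (‖x‖ ^ (δ - 1) * a) := by positivity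
  refine (norm_sub_le _ _).trans ?_
  refine (add_le_add_left ((norm_sub_le _ _).trans (add_le_add_left (norm_sub_le _ _) _)) _).trans ?_
  linarith

end Taming

/-- For `δ ≥ 2`, the second Fréchet derivative of the taming map satisfies, for
every `x` and every `u` with `‖u‖ ≤ 1`,
`‖Υ_h″(x)(u,u)‖ ≤ 2δ²‖x‖^{2δ-1} h^{-2θ} + (δ²+5δ)‖x‖^{δ-1} h^{-θ}`. -/
theorem taming_second_fderiv_bound
    (d : ℕ) (hd : 1 ≤ d) (h θ δ : ℝ) (hh : 0 < h) (hθ : 0 < θ) (hδ : 2 ≤ δ)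
    (Υ : EuclideanSpace ℝ (Fin d) → EuclideanSpace ℝ (Fin d))
    (hΥ : ∀ x, Υ x = (1 + ‖x‖ ^ δ * h ^ (-θ))⁻¹ • x)
    (x : EuclideanSpace ℝ (Fin d)) :
    ∃ D2 : EuclideanSpace ℝ (Fin d) →L[ℝ]
        EuclideanSpace ℝ (Fin d) →L[ℝ] EuclideanSpace ℝ (Fin d),
      HasFDerivAt (fderiv ℝ Υ) D2 x ∧
      ∀ u : EuclideanSpace ℝ (Fin d), ‖u‖ ≤ 1 →
        ‖D2 u u‖ ≤ 2 * δ ^ (2 : ℕ) * ‖x‖ ^ (2 * δ - 1) * h ^ (-(2 * θ))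
          + (δ ^ (2 : ℕ) + 5 * δ) * ‖x‖ ^ (δ - 1) * h ^ (-θ) := by
  have ha : 0 < h ^ (-θ) := Real.rpow_pos_of_pos hh _
  have ha2 : h ^ (-(2 * θ)) = (h ^ (-θ)) ^ 2 := by
    rw [← Real.rpow_mul_natCast hh.le]
    congr 1
    push_cast
    ring
  have hfd : fderiv ℝ Υ = Taming.D1 (h ^ (-θ)) δ := by
    have hΥ' : Υ = fun y => Taming.fac (h ^ (-θ)) δ y • y := funext hΥ
    funext y
    rw [hΥ']
    exact (Taming.hasFDerivAt_taming ha hδ y).fderiv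
  rw [hfd, ha2]
  rcases eq_or_ne x 0 with rfl | hx
  · refine ⟨0, Taming.hasFDerivAt_D1_zero ha hδ, fun u _ => ?_⟩
    simp only [_root_.zero_apply, norm_zero]
    have h1 : (0 : ℝ) ^ (2 * δ - 1) = 0 := Real.zero_rpow (by linarith)
    have h2 : (0 : ℝ) ^ (δ - 1) = 0 := Real.zero_rpow (by linarith)
    simp [h1, h2]
  · obtain ⟨D2, hD2, hval⟩ := Taming.exists_hasFDerivAt_D1 ha hδ hx
    refine ⟨D2, hD2, fun u hu => ?_⟩
    rw [hval u]
    exact Taming.norm_second_le ha hδ hx hu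
end

section
/- Let d ≥ 1, let θ > 0 and δ ≥ 1, let γ₁ > 0, γ₂ > 0, 0 < γ₃ < 1, let v₀ > 0 and ε₀ > 0, and set h₀ := exp(−(γ₂ v₀/ε₀)^{1/(1−γ₃)}). Then for every h with 0 < h ≤ h₀ and all y, z ∈ ℝ^d such that ‖y‖ ≤ γ₁ exp(γ₂ |ln h|^{γ₃}), the point x := y + Υ_h(z) (which is the one-step output of a stopped increment-tamed scheme started at y) satisfies ‖x‖^{v₀} ≤ (2^{v₀−1} + 1)(1 + γ₁^{v₀}) h^{−ε₀}. -/
open Real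

/-!
Since `h ≤ 1` and `δ ≥ 1`, the tamed increment has norm at most `1`: if `‖z‖ ≤ 1` this is clear,
and otherwise `‖z‖ ≤ ‖z‖ ^ δ ≤ ‖z‖ ^ δ * h ^ (-θ)`. With `L = |log h|`, the threshold on `h` says
exactly that `γ₂ v₀ / ε₀ ≤ L ^ (1 - γ₃)`, that is `γ₂ v₀ L ^ γ₃ ≤ ε₀ L`, so the `v₀`-th power of
`exp (γ₂ L ^ γ₃)` is at most `h ^ (-ε₀)`. Finally `(a + b) ^ v₀ ≤ c (a ^ v₀ + b ^ v₀)` with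
`c = 2 ^ (v₀ - 1)` for `v₀ ≥ 1` (convexity) and `c = 1` for `v₀ ≤ 1` (subadditivity), and
`2 ^ (v₀ - 1) + 1` dominates `c` in both cases.
-/

lemma add_rpow_le_two_rpow_add_one_mul {a b v : ℝ} (ha : 0 ≤ a) (hb : 0 ≤ b) (hv : 0 < v) :
    (a + b) ^ v ≤ (2 ^ (v - 1) + 1) * (a ^ v + b ^ v) := by
  have hs : 0 ≤ a ^ v + b ^ v := by positivity
  have h2 : (0 : ℝ) ≤ 2 ^ (v - 1) := by positivity
  rcases le_total 1 v with h1 | h1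
  · have hconv : (a + b) ^ v ≤ 2 ^ (v - 1) * (a ^ v + b ^ v) := by
      lift a to NNReal using ha
      lift b to NNReal using hb
      exact_mod_cast NNReal.rpow_add_le_mul_rpow_add_rpow a b h1
    linarith
  · have := Real.rpow_add_le_add_rpow ha hb hv.le h1
    nlinarith [mul_nonneg h2 hs]

lemma tamed_norm_le_one {r δ k : ℝ} (hr : 0 ≤ r) (hδ : 1 ≤ δ) (hk : 1 ≤ k) :
    (1 + r ^ δ * k)⁻¹ * r ≤ 1 := by
  have hp : 0 ≤ r ^ δ := by positivity
  rw [inv_mul_le_iff₀ (by positivity), mul_one]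
  rcases le_total r 1 with h1 | h1
  · nlinarith
  · have := Real.self_le_rpow_of_one_le h1 hδ
    nlinarith

/-- With `L = |log h|`, `c = γ₂ v₀`, `e = ε₀`, this compares the exponent of the `v₀`-th power of
`exp (γ₂ L ^ γ₃)` with that of `h ^ (-ε₀)`; the hypothesis on `L` is the step-size restriction. -/
lemma mul_rpow_le_of_rpow_le {g e c L : ℝ} (hc : 0 ≤ c) (he : 0 < e) (hL : 0 < L) (hg : g < 1)
    (h : (c / e) ^ ((1 : ℝ) / (1 - g)) ≤ L) : c * L ^ g ≤ e * L := by
  have hg' : 0 < 1 - g := by linarith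
  have h1 : c / e ≤ L ^ (1 - g) := by
    rw [one_div] at h
    exact (Real.rpow_inv_le_iff_of_pos (by positivity) hL.le hg').1 h
  rw [div_le_iff₀ he] at h1
  calc c * L ^ g ≤ L ^ (1 - g) * e * L ^ g := by gcongr
    _ = e * (L ^ (1 - g) * L ^ g) := by ring
    _ = e * L := by rw [← Real.rpow_add hL, sub_add_cancel, Real.rpow_one]

/-- One-step output bound for the stopped increment-tamed scheme: if
`‖y‖ ≤ γ₁ exp(γ₂|ln h|^{γ₃})` and `0 < h ≤ exp(-(γ₂ v₀/ε₀)^{1/(1-γ₃)})`, then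
`x := y + Υ_h(z)` satisfies `‖x‖^{v₀} ≤ (2^{v₀-1}+1)(1+γ₁^{v₀}) h^{-ε₀}`. -/
theorem one_step_moment_bound
    (d : ℕ) (hd : 1 ≤ d) (θ δ γ₁ γ₂ γ₃ v₀ ε₀ : ℝ)
    (hθ : 0 < θ) (hδ : 1 ≤ δ) (hγ₁ : 0 < γ₁) (hγ₂ : 0 < γ₂)
    (hγ₃0 : 0 < γ₃) (hγ₃1 : γ₃ < 1) (hv₀ : 0 < v₀) (hε₀ : 0 < ε₀)
    (h : ℝ) (hh0 : 0 < h)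
    (hh : h ≤ Real.exp (-(γ₂ * v₀ / ε₀) ^ ((1 : ℝ) / (1 - γ₃))))
    (Υ : EuclideanSpace ℝ (Fin d) → EuclideanSpace ℝ (Fin d))
    (hΥ : ∀ x, Υ x = (1 + ‖x‖ ^ δ * h ^ (-θ))⁻¹ • x)
    (y z : EuclideanSpace ℝ (Fin d))
    (hy : ‖y‖ ≤ γ₁ * Real.exp (γ₂ * |Real.log h| ^ γ₃)) :
    ‖y + Υ z‖ ^ v₀ ≤ (2 ^ (v₀ - 1) + 1) * (1 + γ₁ ^ v₀) * h ^ (-ε₀) := by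
  have hlog : Real.log h ≤ -(γ₂ * v₀ / ε₀) ^ ((1 : ℝ) / (1 - γ₃)) :=
    (Real.log_le_iff_le_exp hh0).2 hh
  have hpos : 0 < (γ₂ * v₀ / ε₀) ^ ((1 : ℝ) / (1 - γ₃)) := by positivity
  have hneg : Real.log h < 0 := by linarith
  have hh1 : h ≤ 1 := ((Real.log_neg_iff hh0).1 hneg).le
  rw [abs_of_neg hneg] at hy
  have hexp : γ₂ * v₀ * (-Real.log h) ^ γ₃ ≤ ε₀ * -Real.log h :=
    mul_rpow_le_of_rpow_le (by positivity) hε₀ (by linarith) hγ₃1 (by linarith)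
  have hE : Real.exp (γ₂ * (-Real.log h) ^ γ₃) ^ v₀ ≤ h ^ (-ε₀) := by
    rw [← Real.exp_mul, Real.rpow_def_of_pos hh0, Real.exp_le_exp]
    linarith
  have hH : 1 ≤ h ^ (-ε₀) :=
    Real.one_le_rpow_of_pos_of_le_one_of_nonpos hh0 hh1 (by linarith)
  have hk : 1 ≤ h ^ (-θ) :=
    Real.one_le_rpow_of_pos_of_le_one_of_nonpos hh0 hh1 (by linarith)
  have hz : ‖Υ z‖ ≤ 1 := by
    have hc : 0 ≤ (1 + ‖z‖ ^ δ * h ^ (-θ))⁻¹ := by positivity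
    rw [hΥ, norm_smul, Real.norm_of_nonneg hc]
    exact tamed_norm_le_one (norm_nonneg z) hδ hk
  have hyv : ‖y‖ ^ v₀ ≤ γ₁ ^ v₀ * h ^ (-ε₀) :=
    calc ‖y‖ ^ v₀ ≤ (γ₁ * Real.exp (γ₂ * (-Real.log h) ^ γ₃)) ^ v₀ := by gcongr
      _ = γ₁ ^ v₀ * Real.exp (γ₂ * (-Real.log h) ^ γ₃) ^ v₀ :=
        Real.mul_rpow hγ₁.le (Real.exp_pos _).le
      _ ≤ γ₁ ^ v₀ * h ^ (-ε₀) := by gcongr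
  have hzv : ‖Υ z‖ ^ v₀ ≤ 1 := Real.rpow_le_one (norm_nonneg _) hz hv₀.le
  calc ‖y + Υ z‖ ^ v₀ ≤ (‖y‖ + ‖Υ z‖) ^ v₀ := by gcongr; exact norm_add_le _ _
    _ ≤ (2 ^ (v₀ - 1) + 1) * (‖y‖ ^ v₀ + ‖Υ z‖ ^ v₀) :=
      add_rpow_le_two_rpow_add_one_mul (norm_nonneg _) (norm_nonneg _) hv₀
    _ ≤ (2 ^ (v₀ - 1) + 1) * (γ₁ ^ v₀ * h ^ (-ε₀) + h ^ (-ε₀)) := by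
      gcongr
      exact hzv.trans hH
    _ = (2 ^ (v₀ - 1) + 1) * (1 + γ₁ ^ v₀) * h ^ (-ε₀) := by ring
end

section
/- Let d ≥ 1, m ≥ 1, let h > 0, θ > 0 and δ ≥ 2, and define the taming map Υ_h : ℝ^d → ℝ^d by Υ_h(x) = (1 + ‖x‖^δ h^{−θ})^{−1} x. Then for every z ∈ ℝ^d, every vector f ∈ ℝ^d and every d × m real matrix g with columns g^{(1)}, …, g^{(m)}, one has ‖Υ_h′(z) f − f + (1/2) Σ_{j=1}^{m} Υ_h″(z)(g^{(j)}, g^{(j)})‖ ≤ (δ + 1) ‖z‖^δ h^{−θ} ‖f‖ + ( δ² ‖z‖^{2δ−1} h^{−2θ} + (1/2)(δ² + 5δ) ‖z‖^{δ−1} h^{−θ} ) ‖g‖², where ‖g‖ is the Hilbert–Schmidt (Frobenius) norm of g. -/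
/-!
Write `c = h^{-θ}`, `r = ‖x‖`, `φ(x) = (1 + c r^δ)⁻¹ ∈ (0, 1]` and `a = c δ r^{δ-2} ⟪x, v⟫`. Then
`Υ'(x) v = φ v - φ² a x` everywhere, which gives `‖Υ'(x) v - v‖ ≤ (δ + 1) c r^δ ‖v‖`
(`norm_taming_fderiv_sub_le`), the drift part of the estimate.

For the second derivative, let `x ≠ 0` and differentiate `t ↦ Υ'(x + t v) v` at `t = 0`
(`taming_snd_deriv`):
`Υ''(x)(v, v) = -2 φ² a v - (φ² b - 2 φ³ a²) x` with
`b = c δ ((δ-2) r^{δ-4} ⟪x, v⟫² + r^{δ-2} ‖v‖²)`.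
By Cauchy-Schwarz `|a| ≤ c δ r^{δ-1} ‖v‖` and `|b| ≤ c δ (δ-1) r^{δ-2} ‖v‖²`, and `0 < φ ≤ 1`, so
`‖Υ''(x)(v, v)‖ ≤ (2 δ² c² r^{2δ-1} + (δ² + δ) c r^{δ-1}) ‖v‖²`, which is better than needed.
At the origin the first estimate shows `Υ' - id = O(r²)`, hence `Υ''(0) = 0`.
The theorem follows by summing over the columns of `g`.
-/

open Real

section Taming

variable {E : Type*} [NormedAddCommGroup E] [InnerProductSpace ℝ E]

/-- The taming map with the constant `c` in place of `h^{-θ}`. -/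
noncomputable def tamingMap (c δ : ℝ) (x : E) : E := (1 + ‖x‖ ^ δ * c)⁻¹ • x

lemma taming_den_ge {c : ℝ} (hc : 0 < c) (δ : ℝ) (x : E) : 1 ≤ 1 + ‖x‖ ^ δ * c := by
  have : 0 ≤ ‖x‖ ^ δ * c := by positivity
  linarith

lemma taming_fderiv_apply {c δ : ℝ} (hc : 0 < c) (hδ : 2 ≤ δ) (x v : E) :
    fderiv ℝ (tamingMap c δ : E → E) x v = (1 + ‖x‖ ^ δ * c)⁻¹ • v
      - ((1 + ‖x‖ ^ δ * c)⁻¹ ^ 2 * (c * δ * ‖x‖ ^ (δ - 2) * inner ℝ x v)) • x := by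
  have hp : 1 + ‖x‖ ^ δ * c ≠ 0 := by linarith [taming_den_ge hc δ x]
  have h1 := ((hasFDerivAt_norm_rpow x (by linarith : 1 < δ)).mul_const c).const_add 1
  have h2 := ((hasDerivAt_inv hp).comp_hasFDerivAt x h1).smul (hasFDerivAt_id x)
  have h3 : HasFDerivAt (tamingMap c δ : E → E) _ x := h2
  rw [h3.fderiv]
  simp [innerSL_apply_apply, sub_eq_add_neg, ← neg_smul]
  congr 1
  field_simp

/-- Cauchy-Schwarz with the power of the norm absorbed; the case `x = 0` holds since the inner
product vanishes, whatever the value of `0 ^ q`. -/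
lemma rpow_mul_abs_inner_le (q : ℝ) (x v : E) :
    ‖x‖ ^ q * |inner ℝ x v| ≤ ‖x‖ ^ (q + 1) * ‖v‖ := by
  rcases eq_or_ne x 0 with rfl | hx
  · simp only [inner_zero_left, abs_zero, mul_zero]
    positivity
  · rw [rpow_add_one (norm_ne_zero_iff.2 hx), mul_assoc]
    exact mul_le_mul_of_nonneg_left (abs_real_inner_le_norm x v) (by positivity)

/-- `|a| ≤ c δ r^{δ-1} ‖v‖` for the number `a` in the formula of the first derivative. -/
lemma abs_taming_coeff_le {c δ : ℝ} (hc : 0 < c) (hδ : 2 ≤ δ) (x v : E) :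
    |c * δ * ‖x‖ ^ (δ - 2) * inner ℝ x v| ≤ c * δ * ‖x‖ ^ (δ - 1) * ‖v‖ := by
  have h := rpow_mul_abs_inner_le (δ - 2) x v
  rw [show δ - 2 + 1 = δ - 1 by ring] at h
  rw [abs_mul, abs_of_nonneg (by positivity : 0 ≤ c * δ * ‖x‖ ^ (δ - 2)), mul_assoc, mul_assoc (c * δ)]
  exact mul_le_mul_of_nonneg_left h (by positivity)

lemma norm_taming_fderiv_sub_le {c δ : ℝ} (hc : 0 < c) (hδ : 2 ≤ δ) (x v : E) :
    ‖fderiv ℝ (tamingMap c δ : E → E) x v - v‖ ≤ (δ + 1) * ‖x‖ ^ δ * c * ‖v‖ := by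
  rw [taming_fderiv_apply hc hδ]
  have ha := abs_taming_coeff_le hc hδ x v
  have hp := taming_den_ge hc δ x
  set a := c * δ * ‖x‖ ^ (δ - 2) * inner ℝ x v
  set φ := (1 + ‖x‖ ^ δ * c)⁻¹ with hφ
  have hφ0 : 0 < φ := by positivity
  have hφ1 : φ ≤ 1 := inv_le_one_of_one_le₀ hp
  have hφ2 : φ ^ 2 ≤ 1 := pow_le_one₀ hφ0.le hφ1
  have hφe : 1 - φ = φ * (‖x‖ ^ δ * c) := by rw [hφ]; field_simp; ring
  have hr : ‖x‖ ^ δ = ‖x‖ ^ (δ - 1) * ‖x‖ := by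
    rw [← rpow_add_one' (norm_nonneg x) (by linarith)]; congr 1; ring
  have e : φ • v - (φ ^ 2 * a) • x - v = -((1 - φ) • v + (φ ^ 2 * a) • x) := by module
  rw [e, norm_neg]
  refine (norm_add_le _ _).trans ?_
  rw [norm_smul, norm_smul, Real.norm_eq_abs, Real.norm_eq_abs, abs_of_nonneg (by linarith), abs_mul,
    abs_of_nonneg (sq_nonneg φ)]
  have h1 : 1 - φ ≤ ‖x‖ ^ δ * c := by
    rw [hφe]; exact mul_le_of_le_one_left (by positivity) hφ1
  have h2 : φ ^ 2 * |a| ≤ c * δ * ‖x‖ ^ (δ - 1) * ‖v‖ :=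
    (mul_le_of_le_one_left (abs_nonneg a) hφ2).trans ha
  calc (1 - φ) * ‖v‖ + φ ^ 2 * |a| * ‖x‖
      ≤ ‖x‖ ^ δ * c * ‖v‖ + c * δ * ‖x‖ ^ (δ - 1) * ‖v‖ * ‖x‖ := by gcongr
    _ = (δ + 1) * ‖x‖ ^ δ * c * ‖v‖ := by rw [hr]; ring

/-- `Υ'(x) - id = O(‖x‖²)` at the origin, so the second derivative vanishes there. -/
lemma taming_hasFDerivAt_fderiv_zero {c δ : ℝ} (hc : 0 < c) (hδ : 2 ≤ δ) :
    HasFDerivAt (fderiv ℝ (tamingMap c δ : E → E))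
      (0 : E →L[ℝ] E →L[ℝ] E) 0 := by
  have hO : (fun x : E => fderiv ℝ (tamingMap c δ : E → E) x - ContinuousLinearMap.id ℝ E)
      =O[nhds 0] fun x => ‖x - 0‖ ^ 2 := by
    refine Asymptotics.IsBigO.of_bound ((δ + 1) * c) ?_
    filter_upwards [Metric.closedBall_mem_nhds (0 : E) one_pos] with x hx
    have hx1 : ‖x‖ ≤ 1 := by simpa using hx
    have hpow : ‖x‖ ^ δ ≤ ‖x‖ ^ 2 := by
      rw [← rpow_natCast]
      exact rpow_le_rpow_of_exponent_ge' (norm_nonneg x) hx1 (by norm_num) (by exact_mod_cast hδ)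
    rw [sub_zero, norm_of_nonneg (by positivity)]
    refine ContinuousLinearMap.opNorm_le_bound _ (by positivity) fun v => ?_
    refine (norm_taming_fderiv_sub_le hc hδ x v).trans ?_
    calc (δ + 1) * ‖x‖ ^ δ * c * ‖v‖ ≤ (δ + 1) * ‖x‖ ^ 2 * c * ‖v‖ := by gcongr
      _ = _ := by ring
  have := (hO.hasFDerivAt (𝕜 := ℝ) (by norm_num)).add_const (ContinuousLinearMap.id ℝ E)
  simpa using this

lemma taming_differentiableAt_fderiv {c δ : ℝ} (hc : 0 < c) {x : E} (hx : x ≠ 0) :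
    DifferentiableAt ℝ (fderiv ℝ (tamingMap c δ : E → E)) x := by
  have hp : 1 + ‖x‖ ^ δ * c ≠ 0 := by linarith [taming_den_ge hc δ x]
  have h1 : ContDiffAt ℝ 2 (fun y : E => ‖y‖ ^ δ) x :=
    (contDiffAt_norm ℝ hx).rpow_const_of_ne (norm_ne_zero_iff.2 hx)
  have h2 : ContDiffAt ℝ 2 (tamingMap c δ : E → E) x :=
    ((contDiffAt_const.add (h1.mul contDiffAt_const)).inv hp).smul contDiffAt_id
  exact (h2.fderiv_right (m := 1) (by norm_num)).differentiableAt (by norm_num)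

lemma hasDerivAt_norm_line_rpow (q : ℝ) {x : E} (hx : x ≠ 0) (v : E) :
    HasDerivAt (fun t : ℝ => ‖x + t • v‖ ^ q) (q * ‖x‖ ^ (q - 2) * inner ℝ x v) 0 := by
  have hl : HasDerivAt (fun t : ℝ => x + t • v) v 0 := by
    simpa using ((hasDerivAt_id (0 : ℝ)).smul_const v).const_add x
  have hx' : x + (0 : ℝ) • v ≠ 0 := by simpa using hx
  have h1 := (hl.norm_sq.rpow_const (p := q / 2)
    (Or.inl (pow_ne_zero 2 (norm_ne_zero_iff.2 hx'))))
  have e : ∀ (y : E) (s : ℝ), (‖y‖ ^ 2) ^ (s / 2) = ‖y‖ ^ s := fun y s => by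
    rw [← rpow_natCast, ← rpow_mul (norm_nonneg y)]; congr 1; push_cast; ring
  simp only [e] at h1
  rw [show q / 2 - 1 = (q - 2) / 2 by ring, e] at h1
  convert h1 using 1
  simp only [zero_smul, add_zero]
  ring

/-- The second derivative on the diagonal, away from the origin; only `0 < φ ≤ 1` is recorded
of the weight `φ = (1 + c ‖x‖^δ)⁻¹`.
The norm is raised to `δ - 2`, which need not exceed `1`, so the weight is differentiated along the
line `t ↦ x + t v` at a point where the norm does not vanish. -/
lemma taming_snd_deriv {c δ : ℝ} (hc : 0 < c) (hδ : 2 ≤ δ) {x : E} (hx : x ≠ 0) (v : E) :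
    ∃ φ a b : ℝ, 0 < φ ∧ φ ≤ 1 ∧ a = c * δ * ‖x‖ ^ (δ - 2) * inner ℝ x v ∧
      b = c * δ * ((δ - 2) * ‖x‖ ^ (δ - 4) * inner ℝ x v ^ 2 + ‖x‖ ^ (δ - 2) * ‖v‖ ^ 2) ∧
      fderiv ℝ (fderiv ℝ (tamingMap c δ : E → E)) x v v
        = -((2 * φ ^ 2 * a) • v + (φ ^ 2 * b - 2 * φ ^ 3 * a ^ 2) • x) := by
  have hp := taming_den_ge hc δ x
  refine ⟨(1 + ‖x‖ ^ δ * c)⁻¹, _, _, by positivity, inv_le_one_of_one_le₀ hp, rfl, rfl, ?_⟩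
  have hl : HasDerivAt (fun t : ℝ => x + t • v) v 0 := by
    simpa using ((hasDerivAt_id (0 : ℝ)).smul_const v).const_add x
  have hF : HasDerivAt (fun t : ℝ => fderiv ℝ (tamingMap c δ : E → E) (x + t • v) v)
      (fderiv ℝ (fderiv ℝ (tamingMap c δ : E → E)) x v v) 0 := by
    have h0 : HasFDerivAt (fderiv ℝ (tamingMap c δ : E → E))
        (fderiv ℝ (fderiv ℝ (tamingMap c δ : E → E)) x) (x + (0 : ℝ) • v) := by
      simpa using (taming_differentiableAt_fderiv hc hx).hasFDerivAt
    have h1 : HasDerivAt (fun t : ℝ => fderiv ℝ (tamingMap c δ : E → E) (x + t • v))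
        (fderiv ℝ (fderiv ℝ (tamingMap c δ : E → E)) x v) 0 := h0.comp_hasDerivAt (0 : ℝ) hl
    have h2 := h1.clm_apply (hasDerivAt_const (0 : ℝ) v)
    rw [map_zero, add_zero] at h2
    exact h2
  simp only [taming_fderiv_apply hc hδ] at hF
  have hp0 : 1 + ‖x + (0 : ℝ) • v‖ ^ δ * c ≠ 0 := by
    linarith [taming_den_ge hc δ (x + (0 : ℝ) • v)]
  have hφ := (((hasDerivAt_norm_line_rpow δ hx v).mul_const c).const_add 1).fun_inv hp0
  have hi : HasDerivAt (fun t : ℝ => inner ℝ (x + t • v) v) (‖v‖ ^ 2) 0 := by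
    simpa using hl.inner ℝ (hasDerivAt_const (0 : ℝ) v)
  have hG := (hφ.smul_const v).fun_sub ((((hφ.fun_pow 2).fun_mul
    (((hasDerivAt_norm_line_rpow (δ - 2) hx v).const_mul (c * δ)).fun_mul hi))).fun_smul hl)
  rw [hF.unique hG]
  simp only [zero_smul, add_zero, show δ - 2 - 2 = δ - 4 by ring,
    Nat.cast_ofNat, show 2 - 1 = 1 from rfl, pow_one]
  have hp' : 1 + ‖x‖ ^ δ * c ≠ 0 := by linarith
  generalize hP : 1 + ‖x‖ ^ δ * c = P at hp'
  match_scalars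
  all_goals
    field_simp
    ring

lemma norm_taming_snd_deriv_le {c δ : ℝ} (hc : 0 < c) (hδ : 2 ≤ δ) (x v : E) :
    ‖fderiv ℝ (fderiv ℝ (tamingMap c δ : E → E)) x v v‖
      ≤ (2 * δ ^ 2 * ‖x‖ ^ (2 * δ - 1) * c ^ 2 + (δ ^ 2 + δ) * ‖x‖ ^ (δ - 1) * c) * ‖v‖ ^ 2 := by
  rcases eq_or_ne x 0 with rfl | hx
  · rw [(taming_hasFDerivAt_fderiv_zero hc hδ).fderiv]
    simp only [zero_apply]
    rw [norm_zero (E := E)]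
    positivity
  obtain ⟨φ, a, b, hφ0, hφ1, ha, hb, hD⟩ := taming_snd_deriv hc hδ hx v
  have hr : ‖x‖ ≠ 0 := norm_ne_zero_iff.2 hx
  have ha' : |a| ≤ c * δ * ‖x‖ ^ (δ - 1) * ‖v‖ := ha ▸ abs_taming_coeff_le hc hδ x v
  have hr1 : ‖x‖ ^ (δ - 1) = ‖x‖ ^ (δ - 2) * ‖x‖ := by
    rw [← rpow_add_one hr]; congr 1; ring
  have hr2 : ‖x‖ ^ (δ - 2) = ‖x‖ ^ (δ - 4) * ‖x‖ ^ 2 := by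
    rw [← rpow_add_natCast hr]; congr 1; push_cast; ring
  have hr3 : ‖x‖ ^ (2 * δ - 1) = (‖x‖ ^ (δ - 1)) ^ 2 * ‖x‖ := by
    rw [← rpow_mul_natCast (norm_nonneg x), ← rpow_add_one hr]; congr 1; push_cast; ring
  have hδ2 : 0 ≤ δ - 2 := by linarith
  have hi2 : inner ℝ x v ^ 2 ≤ ‖x‖ ^ 2 * ‖v‖ ^ 2 := by
    rw [← sq_abs, ← mul_pow]
    exact pow_le_pow_left₀ (abs_nonneg _) (abs_real_inner_le_norm x v) 2
  have hb0 : 0 ≤ b := by rw [hb]; positivity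
  have hb' : b ≤ c * δ * (δ - 1) * ‖x‖ ^ (δ - 2) * ‖v‖ ^ 2 := by
    calc b ≤ c * δ * ((δ - 2) * ‖x‖ ^ (δ - 4) * (‖x‖ ^ 2 * ‖v‖ ^ 2)
          + ‖x‖ ^ (δ - 2) * ‖v‖ ^ 2) := by rw [hb]; gcongr
      _ = _ := by rw [hr2]; ring
  have hA : |2 * φ ^ 2 * a| ≤ 2 * (c * δ * ‖x‖ ^ (δ - 1) * ‖v‖) := by
    rw [abs_mul, abs_of_nonneg (by positivity), mul_assoc]
    exact mul_le_mul_of_nonneg_left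
      ((mul_le_of_le_one_left (abs_nonneg a) (pow_le_one₀ hφ0.le hφ1)).trans ha') two_pos.le
  have hB : |φ ^ 2 * b - 2 * φ ^ 3 * a ^ 2|
      ≤ c * δ * (δ - 1) * ‖x‖ ^ (δ - 2) * ‖v‖ ^ 2 + 2 * (c * δ * ‖x‖ ^ (δ - 1) * ‖v‖) ^ 2 := by
    refine (abs_sub _ _).trans (add_le_add ?_ ?_)
    · rw [abs_of_nonneg (by positivity)]
      exact (mul_le_of_le_one_left hb0 (pow_le_one₀ hφ0.le hφ1)).trans hb'
    · rw [abs_of_nonneg (by positivity), mul_assoc]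
      gcongr
      refine (mul_le_of_le_one_left (sq_nonneg a) (pow_le_one₀ hφ0.le hφ1)).trans ?_
      rw [← sq_abs]
      gcongr
  rw [hD, norm_neg]
  refine (norm_add_le _ _).trans ?_
  rw [norm_smul, norm_smul, Real.norm_eq_abs, Real.norm_eq_abs]
  calc _ ≤ 2 * (c * δ * ‖x‖ ^ (δ - 1) * ‖v‖) * ‖v‖
        + (c * δ * (δ - 1) * ‖x‖ ^ (δ - 2) * ‖v‖ ^ 2
          + 2 * (c * δ * ‖x‖ ^ (δ - 1) * ‖v‖) ^ 2) * ‖x‖ := by gcongr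
    _ = _ := by rw [hr3, hr1]; ring

end Taming

/-- The drift-perturbation estimate for the stopped increment-tamed Euler method:
for `δ ≥ 2`, every `z, f ∈ ℝ^d` and every `d × m` matrix `g` with columns `g^{(j)}`,
`‖Υ_h′(z) f - f + ½ Σ_j Υ_h″(z)(g^{(j)},g^{(j)})‖
  ≤ (δ+1)‖z‖^δ h^{-θ}‖f‖ + (δ²‖z‖^{2δ-1}h^{-2θ} + ½(δ²+5δ)‖z‖^{δ-1}h^{-θ})‖g‖²`,
where `‖g‖` is the Hilbert–Schmidt (Frobenius) norm of `g`. -/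
theorem taming_drift_perturbation_bound
    (d m : ℕ) (hd : 1 ≤ d) (hm : 1 ≤ m) (h θ δ : ℝ)
    (hh : 0 < h) (hθ : 0 < θ) (hδ : 2 ≤ δ)
    (Υ : EuclideanSpace ℝ (Fin d) → EuclideanSpace ℝ (Fin d))
    (hΥ : ∀ x, Υ x = (1 + ‖x‖ ^ δ * h ^ (-θ))⁻¹ • x)
    (z f : EuclideanSpace ℝ (Fin d)) (g : Matrix (Fin d) (Fin m) ℝ)
    (gcol : Fin m → EuclideanSpace ℝ (Fin d))
    (hgcol : ∀ j i, gcol j i = g i j)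
    (gnorm : ℝ) (hgnorm : gnorm = Real.sqrt (∑ i, ∑ j, (g i j) ^ 2)) :
    ‖fderiv ℝ Υ z f - f
        + (1 / 2 : ℝ) • ∑ j, fderiv ℝ (fderiv ℝ Υ) z (gcol j) (gcol j)‖
      ≤ (δ + 1) * ‖z‖ ^ δ * h ^ (-θ) * ‖f‖
        + (δ ^ (2 : ℕ) * ‖z‖ ^ (2 * δ - 1) * h ^ (-(2 * θ))
            + (1 / 2) * (δ ^ (2 : ℕ) + 5 * δ) * ‖z‖ ^ (δ - 1) * h ^ (-θ))
          * gnorm ^ (2 : ℕ) := by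
  have hc : 0 < h ^ (-θ) := rpow_pos_of_pos hh _
  have hc2 : h ^ (-(2 * θ)) = (h ^ (-θ)) ^ 2 := by
    rw [← rpow_mul_natCast hh.le]; congr 1; push_cast; ring
  have hU : Υ = tamingMap (h ^ (-θ)) δ := funext hΥ
  have hg : gnorm ^ 2 = ∑ j, ‖gcol j‖ ^ 2 := by
    rw [hgnorm, sq_sqrt (by positivity), Finset.sum_comm]
    refine Finset.sum_congr rfl fun j _ => ?_
    simp [EuclideanSpace.norm_sq_eq, hgcol]
  rw [hU, hc2, hg]
  set c := h ^ (-θ)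
  refine (norm_add_le _ _).trans (add_le_add (norm_taming_fderiv_sub_le hc hδ z f) ?_)
  rw [norm_smul, norm_of_nonneg (by norm_num), Finset.mul_sum]
  calc _ ≤ (1 / 2 : ℝ) * ∑ j, ‖fderiv ℝ (fderiv ℝ (tamingMap c δ)) z (gcol j) (gcol j)‖ := by
        gcongr; exact norm_sum_le _ _
    _ = ∑ j, (1 / 2 : ℝ) * ‖fderiv ℝ (fderiv ℝ (tamingMap c δ)) z (gcol j) (gcol j)‖ := by
        rw [Finset.mul_sum]
    _ ≤ _ := by
        refine Finset.sum_le_sum fun j _ => ?_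
        have h1 := norm_taming_snd_deriv_le hc hδ z (gcol j)
        have h2 : 0 ≤ 2 * δ * ‖z‖ ^ (δ - 1) * c * ‖gcol j‖ ^ 2 := by positivity
        nlinarith
end
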